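/- arXiv:2405.16633 — 6 statements merged into one kernel-verified Lean document; each statement's English description precedes it below -/
import Mathlib

section
/- For every real number q with 0 < q < 1, the quantity θ(q) = 2/(q(5 - q + √(9 - 10q + q²))) + 2/(q(1 - q + √(9 - 10q + q²))) satisfies θ(q) ≥ 2, with equality if and only if q = 2/3. -/
/-!
The conic `s² = 9 - 10q + q² = (1 - q)(9 - q)` passes through `(q, s) = (1, 0)`, so lines through
that point parametrize it rationally: with `u = s / (1 - q)` one gets `q = (u² - 9) / (u² - 1)` and
`s = 8u / (u² - 1)`, and `0 < q < 1` corresponds to `3 < u`. In this parameter `θ` collapses to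
`(u - 1)² / (4(u - 3))`, and `(u - 1)² - 8(u - 3) = (u - 5)²`. The value `u = 5` gives `q = 2/3`.
-/

namespace FlipWalk

/-- The cover time constant `θ(q)` of the flip random walk. It is meant for `0 < q < 1`; elsewhere
the square root or the quotients may take junk values. -/
noncomputable def theta (q : ℝ) : ℝ :=
  2 / (q * (5 - q + √(9 - 10 * q + q ^ 2))) + 2 / (q * (1 - q + √(9 - 10 * q + q ^ 2)))

/-- The `q`-coordinate of the second intersection point of the conic `s² = 9 - 10q + q²` with the
line `s = u(1 - q)`. It is used for `1 < u`, which is the branch `q < 1`, `0 < s`. -/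
noncomputable def conicParam (u : ℝ) : ℝ :=
  (u ^ 2 - 9) / (u ^ 2 - 1)

variable {q u : ℝ}

lemma exists_conicParam_eq (hq : q < 1) : ∃ u, 1 < u ∧ conicParam u = q := by
  have hq' : 0 < 1 - q := sub_pos.mpr hq
  have one_lt : 1 < (9 - q) / (1 - q) := by
    rw [one_lt_div hq']
    linarith
  refine ⟨√((9 - q) / (1 - q)), Real.lt_sqrt_of_sq_lt (by simpa using one_lt), ?_⟩
  rw [conicParam, Real.sq_sqrt (by linarith), div_eq_iff (by linarith)]
  field_simp
  ring

lemma conicParam_pos_iff (hu : 1 < u) : 0 < conicParam u ↔ 3 < u := by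
  have hden : 0 < u ^ 2 - 1 := by nlinarith
  rw [conicParam, div_pos_iff_of_pos_right hden, sub_pos, show (9 : ℝ) = 3 ^ 2 by norm_num,
    pow_lt_pow_iff_left₀ (by norm_num) (by linarith) two_ne_zero]

lemma conicParam_eq_two_thirds_iff (hu : 1 < u) : conicParam u = 2 / 3 ↔ u = 5 := by
  have hden : u ^ 2 - 1 ≠ 0 := by nlinarith
  rw [conicParam, div_eq_div_iff hden three_ne_zero,
    ← pow_left_inj₀ (by linarith : 0 ≤ u) (by norm_num : (0 : ℝ) ≤ 5) two_ne_zero]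
  constructor <;> intro h <;> linarith

lemma sqrt_conicParam (hu : 1 < u) :
    √(9 - 10 * conicParam u + conicParam u ^ 2) = 8 * u / (u ^ 2 - 1) := by
  have hden : 0 < u ^ 2 - 1 := by nlinarith
  have on_conic : 9 - 10 * conicParam u + conicParam u ^ 2 = (8 * u / (u ^ 2 - 1)) ^ 2 := by
    rw [conicParam]
    field_simp
    ring
  rw [on_conic, Real.sqrt_sq (by positivity)]

lemma theta_conicParam (hu : 1 < u) (hu3 : u ≠ 3) :
    theta (conicParam u) = (u - 1) ^ 2 / (4 * (u - 3)) := by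
  have h_sub_one : u - 1 ≠ 0 := by linarith
  have h_add_one : u + 1 ≠ 0 := by linarith
  have h_sub_three : u - 3 ≠ 0 := sub_ne_zero.mpr hu3
  have h_add_three : u + 3 ≠ 0 := by linarith
  have hq : conicParam u = (u - 3) * (u + 3) / ((u - 1) * (u + 1)) := by
    rw [conicParam]
    congr 1 <;> ring
  have hs : √(9 - 10 * conicParam u + conicParam u ^ 2) = 8 * u / ((u - 1) * (u + 1)) := by
    rw [sqrt_conicParam hu]
    congr 1
    ring
  have h_five : 5 - conicParam u + √(9 - 10 * conicParam u + conicParam u ^ 2) =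
      4 * (u + 1) / (u - 1) := by
    rw [hs, hq]
    field_simp
    ring
  have h_one : 1 - conicParam u + √(9 - 10 * conicParam u + conicParam u ^ 2) =
      8 / (u - 1) := by
    rw [hs, hq]
    field_simp
    ring
  rw [theta, h_five, h_one, hq]
  field_simp
  ring

lemma theta_conicParam_sub_two (hu : 1 < u) (hu3 : u ≠ 3) :
    theta (conicParam u) - 2 = (u - 5) ^ 2 / (4 * (u - 3)) := by
  have h_sub_three : u - 3 ≠ 0 := sub_ne_zero.mpr hu3
  rw [theta_conicParam hu hu3]
  field_simp
  ring

lemma two_le_theta_conicParam (hu : 3 < u) : 2 ≤ theta (conicParam u) := by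
  rw [← sub_nonneg, theta_conicParam_sub_two (by linarith) hu.ne']
  exact div_nonneg (sq_nonneg _) (by linarith)

lemma theta_conicParam_eq_two_iff (hu : 1 < u) (hu3 : u ≠ 3) :
    theta (conicParam u) = 2 ↔ u = 5 := by
  rw [← sub_eq_zero, theta_conicParam_sub_two hu hu3]
  simp [sub_eq_zero, hu3]

end FlipWalk

open FlipWalk

/-- For every real `q` with `0 < q < 1`, the quantity
`θ(q) = 2/(q(5 - q + √(9 - 10q + q²))) + 2/(q(1 - q + √(9 - 10q + q²)))`
satisfies `θ(q) ≥ 2`, with equality iff `q = 2/3`. -/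
theorem theta_ge_two (q : ℝ) (hq0 : 0 < q) (hq1 : q < 1) :
    2 ≤ 2 / (q * (5 - q + Real.sqrt (9 - 10*q + q^2)))
      + 2 / (q * (1 - q + Real.sqrt (9 - 10*q + q^2))) ∧
    (2 / (q * (5 - q + Real.sqrt (9 - 10*q + q^2)))
      + 2 / (q * (1 - q + Real.sqrt (9 - 10*q + q^2))) = 2 ↔ q = 2/3) := by
  change 2 ≤ theta q ∧ (theta q = 2 ↔ q = 2 / 3)
  obtain ⟨u, hu, rfl⟩ := exists_conicParam_eq hq1
  have hu3 : 3 < u := (conicParam_pos_iff hu).mp hq0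
  exact ⟨two_le_theta_conicParam hu3,
    (theta_conicParam_eq_two_iff hu hu3.ne').trans (conicParam_eq_two_thirds_iff hu).symm⟩
end

section
/- Let b ≥ 2 be a real number and let q be a real number with b/(b+1) ≤ q < 1. Then F(1/2) = 1/2 - b(1-q)²/(b - 2q²) - 2(b-1)q²/b² > 0. (Note b - 2q² > 0 under these hypotheses, so the expression is well defined.) -/
/-!
For fixed `q` and `z`, the function `F` of the return-probability equations is nondecreasing in
`b ≥ 2`, so `F(1/2)` is bounded below by its value at `b = 2`. That value factors as
`(1 - q) ((1 + q)² - 2) / (2 (1 + q))`, which is positive for `√2 - 1 < q < 1`.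
-/

open Set

theorem antitoneOn_sub_one_div_sq {K : Type*} [Field K] [LinearOrder K] [IsStrictOrderedRing K] :
    AntitoneOn (fun x : K ↦ (x - 1) / x ^ 2) (Ici 2) := by
  intro x (hx : 2 ≤ x) y (hy : 2 ≤ y) hxy
  have hprod : 1 ≤ (x - 1) * (y - 1) :=
    one_le_mul_of_one_le_of_one_le (by linarith) (by linarith)
  have hdiff : (x - 1) * y ^ 2 - (y - 1) * x ^ 2 = (y - x) * ((x - 1) * (y - 1) - 1) := by ring
  have hcross : 0 ≤ (x - 1) * y ^ 2 - (y - 1) * x ^ 2 :=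
    hdiff ▸ mul_nonneg (sub_nonneg.2 hxy) (sub_nonneg.2 hprod)
  change (y - 1) / y ^ 2 ≤ (x - 1) / x ^ 2
  rw [div_le_div_iff₀ (by positivity) (by positivity)]
  exact sub_nonneg.1 hcross

/-- The function `F(z)` arising from the return-probability equations of the flip random walk on
the infinite tree with one red and `b` blue edges per vertex, where the red edge is chosen with
probability `1 - q` and each blue edge with probability `q / b`. The number `b` is allowed to be any
real. -/
noncomputable def flipReturn (b q z : ℝ) : ℝ :=
  z - (1 - q) ^ 2 * (1 - z) / (1 - q ^ 2 / b - z) - (b - 1) * q ^ 2 / (b ^ 2 * (1 - z))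

theorem monotoneOn_flipReturn {q z : ℝ} (hz : z < 1 - q ^ 2 / 2) :
    MonotoneOn (fun b ↦ flipReturn b q z) (Ici 2) := by
  intro a (ha : 2 ≤ a) b (hb : 2 ≤ b) hab
  have hz1 : 0 < 1 - z := by linarith [sq_nonneg q]
  have hden : 0 < 1 - q ^ 2 / a - z := by
    have : q ^ 2 / a ≤ q ^ 2 / 2 := by gcongr
    linarith
  have hred : (1 - q) ^ 2 * (1 - z) / (1 - q ^ 2 / b - z) ≤
      (1 - q) ^ 2 * (1 - z) / (1 - q ^ 2 / a - z) := by
    gcongr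
  have hblue : (b - 1) * q ^ 2 / (b ^ 2 * (1 - z)) ≤ (a - 1) * q ^ 2 / (a ^ 2 * (1 - z)) := by
    simp only [mul_div_mul_comm]
    exact mul_le_mul_of_nonneg_right (antitoneOn_sub_one_div_sq ha hb hab) (by positivity)
  exact sub_le_sub (sub_le_sub_left hred z) hblue

theorem flipReturn_half {b : ℝ} (hb : b ≠ 0) (q : ℝ) :
    flipReturn b q (1 / 2) =
      1 / 2 - b * (1 - q) ^ 2 / (b - 2 * q ^ 2) - 2 * (b - 1) * q ^ 2 / b ^ 2 := by
  have hden : 1 - q ^ 2 / b - 1 / 2 = (b - 2 * q ^ 2) / (2 * b) := by field_simp; ring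
  rw [flipReturn, hden]
  field_simp
  ring

theorem flipReturn_two_half {q : ℝ} (hq : q ≠ -1) :
    flipReturn 2 q (1 / 2) = (1 - q) * ((1 + q) ^ 2 - 2) / (2 * (1 + q)) := by
  have hadd : 1 + q ≠ 0 := fun h ↦ hq (by linarith)
  have hden : (2 : ℝ) - 2 * q ^ 2 = 2 * ((1 - q) * (1 + q)) := by ring
  rw [flipReturn_half two_ne_zero, hden]
  field_simp
  ring

theorem flipReturn_two_half_pos {q : ℝ} (hq : √2 - 1 < q) (hq1 : q < 1) :
    0 < flipReturn 2 q (1 / 2) := by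
  have hq0 : 0 < q := by linarith [Real.one_lt_sqrt_two]
  have hfactor : 2 < (1 + q) ^ 2 := (Real.sqrt_lt' (by positivity)).1 (by linarith)
  rw [flipReturn_two_half (by linarith)]
  exact div_pos (mul_pos (sub_pos.2 hq1) (sub_pos.2 hfactor)) (by positivity)

theorem sqrt_two_sub_one_lt_div_add_one {b : ℝ} (hb : 1 ≤ b) : √2 - 1 < b / (b + 1) := by
  have hsqrt : √2 < 3 / 2 := (Real.sqrt_lt' (by norm_num)).2 (by norm_num)
  have hhalf : 1 / 2 ≤ b / (b + 1) := by
    rw [div_le_div_iff₀ two_pos (by positivity)]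
    linarith
  linarith

theorem F_half_pos_general {b q : ℝ} (hb : 2 ≤ b) (hq : √2 - 1 < q) (hq1 : q < 1) :
    0 < 1 / 2 - b * (1 - q) ^ 2 / (b - 2 * q ^ 2) - 2 * (b - 1) * q ^ 2 / b ^ 2 := by
  have hq0 : 0 ≤ q := by linarith [Real.one_lt_sqrt_two]
  have hq_sq : q ^ 2 < 1 := (sq_lt_one_iff₀ hq0).2 hq1
  rw [← flipReturn_half (by positivity) q]
  calc
    0 < flipReturn 2 q (1 / 2) := flipReturn_two_half_pos hq hq1
    _ ≤ flipReturn b q (1 / 2) := monotoneOn_flipReturn (by linarith) self_mem_Ici hb hb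

/-- For real `b ≥ 2` and `b/(b+1) ≤ q < 1`,
`F(1/2) = 1/2 - b(1-q)²/(b - 2q²) - 2(b-1)q²/b² > 0`. -/
theorem F_half_pos (b q : ℝ) (hb : 2 ≤ b) (hq1 : b / (b + 1) ≤ q) (hq2 : q < 1) :
    0 < 1/2 - b * (1 - q)^2 / (b - 2*q^2) - 2 * (b - 1) * q^2 / b^2 :=
  F_half_pos_general hb ((sqrt_two_sub_one_lt_div_add_one (by linarith)).trans_le hq1) hq2
end

section
/- Fix a real number q with 0 < q < 1. The function b ↦ 1/2 - b(1-q)²/(b - 2q²) - 2(b-1)q²/b² is strictly increasing on the interval [2, ∞) of real numbers b. (For b ≥ 2 and q < 1 one has b - 2q² > 0, so the function is well defined there.) -/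
/-! Up to the constant `1/2` and the nonnegative factors `(1 - q)²` and `2q²`, the function is the
negative of the sum of `b / (b - 2q²) = 1 + 2q² / (b - 2q²)`, which decreases to the right of its
pole, and `(b - 1) / b²`, which decreases strictly on `[2, ∞)` because
`(x - 1) y² - (y - 1) x² = (y - x) (xy - (x + y))`. -/

section LinearOrderedField

variable {K : Type*} [Field K] [LinearOrder K] [IsStrictOrderedRing K]

theorem antitoneOn_self_div_sub_const {c : K} (hc : 0 ≤ c) :
    AntitoneOn (fun b : K => b / (b - c)) (Set.Ioi c) := by
  intro x (hx : c < x) y (hy : c < y) hxy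
  have self_div_eq (b : K) (hb : c < b) : b / (b - c) = 1 + c / (b - c) := by
    rw [one_add_div (sub_pos.2 hb).ne', sub_add_cancel]
  have : 0 < x - c := sub_pos.2 hx
  simp only [self_div_eq x hx, self_div_eq y hy]
  gcongr

theorem strictAntiOn_sub_const_div_sq {a : K} (ha : 0 < a) :
    StrictAntiOn (fun b : K => (b - a) / b ^ 2) (Set.Ici (2 * a)) := by
  intro x (hx : 2 * a ≤ x) y _ hxy
  have hx₀ : 0 < x := by linarith
  have hy₀ : 0 < y := hx₀.trans hxy
  have hprod : 0 < x * y - a * (x + y) := by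
    have hmul : 2 * a * y ≤ x * y := by gcongr
    have hlt : a * x < a * y := by gcongr
    linarith
  have hdiff : (x - a) * y ^ 2 - (y - a) * x ^ 2 = (y - x) * (x * y - a * (x + y)) := by ring
  refine (div_lt_div_iff₀ (by positivity) (by positivity)).2 (sub_pos.1 ?_)
  exact hdiff ▸ mul_pos (sub_pos.2 hxy) hprod

theorem F_half_strictMonoOn_general {q : K} (hq : q ≠ 0) :
    StrictMonoOn
      (fun b : K => 1 / 2 - b * (1 - q) ^ 2 / (b - 2 * q ^ 2) - 2 * (b - 1) * q ^ 2 / b ^ 2)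
      (Set.Ici 2 ∩ Set.Ioi (2 * q ^ 2)) := by
  rintro x ⟨hx, hx'⟩ y ⟨hy, hy'⟩ hxy
  have hpole : (1 - q) ^ 2 * (y / (y - 2 * q ^ 2)) ≤ (1 - q) ^ 2 * (x / (x - 2 * q ^ 2)) :=
    mul_le_mul_of_nonneg_left (antitoneOn_self_div_sub_const (by positivity) hx' hy' hxy.le)
      (sq_nonneg _)
  have hsq : 2 * q ^ 2 * ((y - 1) / y ^ 2) < 2 * q ^ 2 * ((x - 1) / x ^ 2) :=
    mul_lt_mul_of_pos_left
      (strictAntiOn_sub_const_div_sq one_pos (by simpa using hx) (by simpa using hy) hxy)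
      (by positivity)
  calc 1 / 2 - x * (1 - q) ^ 2 / (x - 2 * q ^ 2) - 2 * (x - 1) * q ^ 2 / x ^ 2
      = 1 / 2 - (1 - q) ^ 2 * (x / (x - 2 * q ^ 2)) - 2 * q ^ 2 * ((x - 1) / x ^ 2) := by ring
    _ < 1 / 2 - (1 - q) ^ 2 * (y / (y - 2 * q ^ 2)) - 2 * q ^ 2 * ((y - 1) / y ^ 2) :=
      (sub_lt_sub_left hsq _).trans_le (sub_le_sub_right (sub_le_sub_left hpole _) _)
    _ = 1 / 2 - y * (1 - q) ^ 2 / (y - 2 * q ^ 2) - 2 * (y - 1) * q ^ 2 / y ^ 2 := by ring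

end LinearOrderedField

/-- Fix `0 < q < 1`. The function `b ↦ 1/2 - b(1-q)²/(b - 2q²) - 2(b-1)q²/b²`
is strictly increasing on `[2, ∞)`. -/
theorem F_half_strictMonoOn (q : ℝ) (hq0 : 0 < q) (hq1 : q < 1) :
    StrictMonoOn (fun b : ℝ => 1/2 - b * (1 - q)^2 / (b - 2*q^2) - 2 * (b - 1) * q^2 / b^2)
      (Set.Ici (2 : ℝ)) := by
  have hq2 : q ^ 2 < 1 := pow_lt_one₀ hq0.le hq1 two_ne_zero
  exact (F_half_strictMonoOn_general hq0.ne').mono fun b (hb : 2 ≤ b) =>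
    ⟨hb, show 2 * q ^ 2 < b by linarith⟩
end

section
/- Let 0 < q < 1, set w = w⁺ = (q/4)(3 - q + √(9 - 10q + q²)), z = 1 - w, and f = z + q²/(4(1 - z)). Then f < 1 and 1/(1 - f) = θ(q), where θ(q) = 2/(q(5 - q + √(9 - 10q + q²))) + 2/(q(1 - q + √(9 - 10q + q²))). -/
/-!
Put `ρ = q/2` and `w = 1 - z`. Then `1 - f = w - ρ²/w = (w - ρ)(w + ρ)/w`, whose reciprocal has the
partial fraction decomposition `1/(2(w + ρ)) + 1/(2(w - ρ))`. At `w = w⁺` the two summands are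
exactly those of `θ(q)`, and `f < 1` amounts to `q/2 < w⁺`.
-/

section FirstReturn

variable {K : Type*} [Field K]

/-- The probability `z + ρ²/(1 - z)` that the flip walk on the infinite tree ever returns to the
root. Here `ρ` and `z` stand for the paper's `ρ_B` and `ψ_B`. -/
def firstReturnProb (ρ z : K) : K :=
  z + ρ ^ 2 / (1 - z)

theorem firstReturnProb_half (q z : K) :
    firstReturnProb (q / 2) z = z + q ^ 2 / (4 * (1 - z)) := by
  rw [firstReturnProb, div_pow, div_div]
  norm_num

theorem one_sub_firstReturnProb {ρ z : K} (hz : 1 - z ≠ 0) :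
    1 - firstReturnProb ρ z = (1 - z - ρ) * (1 - z + ρ) / (1 - z) := by
  rw [firstReturnProb]
  field_simp
  ring

theorem one_div_one_sub_firstReturnProb [NeZero (2 : K)] {ρ z : K} (hz : 1 - z ≠ 0)
    (hadd : 1 - z + ρ ≠ 0) (hsub : 1 - z - ρ ≠ 0) :
    1 / (1 - firstReturnProb ρ z) = 1 / (2 * (1 - z + ρ)) + 1 / (2 * (1 - z - ρ)) := by
  have two_ne : (2 : K) ≠ 0 := two_ne_zero
  rw [one_sub_firstReturnProb hz, one_div_div]
  field_simp
  ring

theorem firstReturnProb_lt_one [LinearOrder K] [IsStrictOrderedRing K] {ρ z : K}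
    (h : |ρ| < 1 - z) : firstReturnProb ρ z < 1 := by
  obtain ⟨hneg, hpos⟩ := abs_lt.mp h
  have hz : 0 < 1 - z := (abs_nonneg ρ).trans_lt h
  have hsub : 0 < 1 - z - ρ := sub_pos.mpr hpos
  have hadd : 0 < 1 - z + ρ := neg_lt_iff_pos_add'.mp hneg
  rw [← sub_pos, one_sub_firstReturnProb hz.ne']
  exact div_pos (mul_pos hsub hadd) hz

end FirstReturn

/-- The quantity `w⁺(q)`, that is, the value of `1 - ψ_B` for the flip walk with parameter `q`. -/
noncomputable def wPlus (q : ℝ) : ℝ :=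
  q / 4 * (3 - q + √(9 - 10 * q + q ^ 2))

theorem two_mul_wPlus_add_half (q : ℝ) :
    2 * (wPlus q + q / 2) = q * (5 - q + √(9 - 10 * q + q ^ 2)) / 2 := by
  rw [wPlus]
  ring

theorem two_mul_wPlus_sub_half (q : ℝ) :
    2 * (wPlus q - q / 2) = q * (1 - q + √(9 - 10 * q + q ^ 2)) / 2 := by
  rw [wPlus]
  ring

theorem half_lt_wPlus {q : ℝ} (hq0 : 0 < q) (hq1 : q < 1) : q / 2 < wPlus q := by
  have hfactor : 0 < 1 - q + √(9 - 10 * q + q ^ 2) :=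
    add_pos_of_pos_of_nonneg (sub_pos.mpr hq1) (Real.sqrt_nonneg _)
  have hdiff : 0 < 2 * (wPlus q - q / 2) := by
    rw [two_mul_wPlus_sub_half]
    exact half_pos (mul_pos hq0 hfactor)
  linarith

/-- For `0 < q < 1`, with `w = w⁺ = (q/4)(3 - q + √(9 - 10q + q²))`, `z = 1 - w`
and `f = z + q²/(4(1 - z))`, we have `f < 1` and `1/(1 - f) = θ(q)`. -/
theorem return_prob_theta (q : ℝ) (hq0 : 0 < q) (hq1 : q < 1) :
    (1 - (q/4) * (3 - q + Real.sqrt (9 - 10*q + q^2)))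
      + q^2 / (4 * (1 - (1 - (q/4) * (3 - q + Real.sqrt (9 - 10*q + q^2))))) < 1 ∧
    1 / (1 - ((1 - (q/4) * (3 - q + Real.sqrt (9 - 10*q + q^2)))
        + q^2 / (4 * (1 - (1 - (q/4) * (3 - q + Real.sqrt (9 - 10*q + q^2)))))))
      = 2 / (q * (5 - q + Real.sqrt (9 - 10*q + q^2)))
        + 2 / (q * (1 - q + Real.sqrt (9 - 10*q + q^2))) := by
  rw [← wPlus, ← firstReturnProb_half]
  have hw : q / 2 < wPlus q := half_lt_wPlus hq0 hq1
  have hz : 1 - (1 - wPlus q) = wPlus q := sub_sub_cancel 1 (wPlus q)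
  constructor
  · apply firstReturnProb_lt_one
    rwa [hz, abs_of_pos (half_pos hq0)]
  · have hadd : wPlus q + q / 2 ≠ 0 := by linarith
    have hsub : wPlus q - q / 2 ≠ 0 := (sub_pos.mpr hw).ne'
    have hne : wPlus q ≠ 0 := ((half_pos hq0).trans hw).ne'
    rw [one_div_one_sub_firstReturnProb (by rwa [hz]) (by rwa [hz]) (by rwa [hz]), hz,
      two_mul_wPlus_add_half, two_mul_wPlus_sub_half, one_div_div, one_div_div]
end

section
/- Let b ≥ 2 be a real number and 0 < q < 1. Then F is strictly decreasing on the open interval (1 - q²/b, 1), where F(z) = z - (1-q)²(1-z)/(1 - q²/b - z) - (b-1)q²/(b²(1-z)). Consequently F has at most one zero in (1 - q²/b, 1). -/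
/-!
With `c = q²/b`, `K = (b-1)q²/b²` and `u = 1 - z ∈ (0, c)`, the function is
`F = 1 - (1-q)² u/(u - c) - (u + K/u)`. The middle fraction is monotone in `z`, and `u + K/u` is
strictly decreasing in `u` as long as `u² ≤ K`; this covers `(0, c)` because `c² ≤ K` amounts to
`1 + q² ≤ b`.
-/

section OrderedField

variable {𝕜 : Type*} [Field 𝕜] [LinearOrder 𝕜] [IsStrictOrderedRing 𝕜] {A K c p r : 𝕜}

theorem monotoneOn_sub_div_sub (hrp : r ≤ p) :
    MonotoneOn (fun z ↦ (p - z) / (r - z)) (Set.Ioi r) := by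
  have one_sub_form {z : 𝕜} (hz : z ∈ Set.Ioi r) :
      (p - z) / (r - z) = 1 - (p - r) / (z - r) := by
    have hz_pos : 0 < z - r := sub_pos.2 hz
    rw [← neg_sub z r, div_neg, eq_sub_iff_add_eq]
    field_simp
    ring
  intro x hx y hy hxy
  have hx_pos : 0 < x - r := sub_pos.2 hx
  simp only [one_sub_form hx, one_sub_form hy]
  exact sub_le_sub_left
    (div_le_div_of_nonneg_left (sub_nonneg.2 hrp) hx_pos (sub_le_sub_right hxy r)) 1

theorem strictAntiOn_add_div_self (hK : c ^ 2 ≤ K) :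
    StrictAntiOn (fun u ↦ u + K / u) (Set.Ioc 0 c) := by
  rintro u ⟨hu, -⟩ v ⟨hv, hvc⟩ huv
  have huvK : u * v < K := calc
    u * v < v * v := by gcongr
    _ ≤ c * c := by gcongr; exact hv.le.trans hvc
    _ = c ^ 2 := (sq c).symm
    _ ≤ K := hK
  have difference : (u + K / u) - (v + K / v) = (v - u) * (K / (u * v) - 1) := by
    field_simp
    ring
  have one_lt : 1 < K / (u * v) := (one_lt_div (mul_pos hu hv)).2 huvK
  exact sub_pos.1 (difference ▸ mul_pos (sub_pos.2 huv) (sub_pos.2 one_lt))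

theorem strictAntiOn_sub_mul_div_sub_div (hA : 0 ≤ A) (hK : c ^ 2 ≤ K) :
    StrictAntiOn (fun z ↦ z - A * (p - z) / (p - c - z) - K / (p - z)) (Set.Ioo (p - c) p) := by
  rintro x ⟨hcx, hxp⟩ y ⟨hcy, hyp⟩ hxy
  have fraction_le : A * ((p - x) / (p - c - x)) ≤ A * ((p - y) / (p - c - y)) :=
    mul_le_mul_of_nonneg_left
      (monotoneOn_sub_div_sub (hcx.trans hxp).le hcx hcy hxy.le) hA
  have add_div_lt : (p - x) + K / (p - x) < (p - y) + K / (p - y) :=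
    strictAntiOn_add_div_self hK ⟨sub_pos.2 hyp, (sub_lt_comm.1 hcy).le⟩
      ⟨sub_pos.2 hxp, (sub_lt_comm.1 hcx).le⟩ (sub_lt_sub_left hxy p)
  simp only [mul_div_assoc]
  linarith

theorem sq_sq_div_le_sub_one_mul_sq_div_sq {b q : 𝕜} (hb : 1 + q ^ 2 ≤ b) :
    (q ^ 2 / b) ^ 2 ≤ (b - 1) * q ^ 2 / b ^ 2 := by
  rw [div_pow, sq (q ^ 2)]
  gcongr
  exact le_sub_iff_add_le'.2 hb

end OrderedField

theorem F_strictAnti_upper_general (b q : ℝ) (hb : 1 + q ^ 2 ≤ b) :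
    StrictAntiOn
      (fun z : ℝ => z - (1 - q)^2 * (1 - z) / (1 - q^2/b - z)
        - (b - 1) * q^2 / (b^2 * (1 - z)))
      (Set.Ioo (1 - q^2/b) 1) ∧
    {z : ℝ | z ∈ Set.Ioo (1 - q^2/b) 1 ∧
      z - (1 - q)^2 * (1 - z) / (1 - q^2/b - z) - (b - 1) * q^2 / (b^2 * (1 - z)) = 0
      }.Subsingleton := by
  simp only [← div_div ((b - 1) * q ^ 2)]
  have strictAnti := strictAntiOn_sub_mul_div_sub_div (p := 1) (sq_nonneg (1 - q))
    (sq_sq_div_le_sub_one_mul_sq_div_sq hb)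
  refine ⟨strictAnti, ?_⟩
  rintro x ⟨hx, hFx⟩ y ⟨hy, hFy⟩
  exact strictAnti.injOn hx hy (hFx.trans hFy.symm)

/-- For real `b ≥ 2` and `0 < q < 1`,
`F(z) = z - (1-q)²(1-z)/(1 - q²/b - z) - (b-1)q²/(b²(1-z))` is strictly
decreasing on `(1 - q²/b, 1)`; consequently it has at most one zero there. -/
theorem F_strictAnti_upper (b q : ℝ) (hb : 2 ≤ b) (hq0 : 0 < q) (hq1 : q < 1) :
    StrictAntiOn
      (fun z : ℝ => z - (1 - q)^2 * (1 - z) / (1 - q^2/b - z)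
        - (b - 1) * q^2 / (b^2 * (1 - z)))
      (Set.Ioo (1 - q^2/b) 1) ∧
    {z : ℝ | z ∈ Set.Ioo (1 - q^2/b) 1 ∧
      z - (1 - q)^2 * (1 - z) / (1 - q^2/b - z) - (b - 1) * q^2 / (b^2 * (1 - z)) = 0
      }.Subsingleton := by
  have hq_sq : q ^ 2 ≤ 1 := pow_le_one₀ hq0.le hq1.le
  exact F_strictAnti_upper_general b q (by linarith)
end

section
/- Let 2/3 ≤ q < 1 and b = 2. Set z* = 1 - w⁺ where w⁺ = (q/4)(3 - q + √(9 - 10q + q²)). Then 0 < z* < 1 - q²/2, F(z*) = 0, and F(z) ≠ 0 for every z ∈ [0, z*). That is, z* is the smallest root of F in [0,1], where F(z) = z - (1-q)²(1-z)/(1 - q²/2 - z) - q²/(4(1-z)). -/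
/-!
Substituting `z = 1 - (q / b) v` turns `F` into `-(q / b) (v - 1) Q(v) / (v (v - q))`, where
`Q(v) = v² - (2b - 1 - (b - 1) q) v + (b - 1) q`. The values `Q(q)` and `Q(1)` are nonpositive,
so neither the pole `q` nor the extra root `1` exceeds the larger root `v⁺` of `Q`, and the fraction
is positive beyond `v⁺`. The point `v = b / q`, which corresponds to `z = 0`, lies beyond `v⁺` too,
as it is to the right of the vertex of `Q` and `Q(b / q) > 0`.
-/

section LargerRoot

variable {s p x : ℝ}

/-- The larger root of the monic quadratic `x² - s x + p` with root sum `s` and root product `p`,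
meaningful when the discriminant `s² - 4p` is nonnegative; otherwise the square root is `0`. -/
noncomputable def largerRoot (s p : ℝ) : ℝ := (s + √(s ^ 2 - 4 * p)) / 2

theorem discrim_nonneg_of_quadratic_nonpos (h : x ^ 2 - s * x + p ≤ 0) : 0 ≤ s ^ 2 - 4 * p := by
  linarith [sq_nonneg (2 * x - s)]

theorem quadratic_largerRoot (h : 0 ≤ s ^ 2 - 4 * p) :
    largerRoot s p ^ 2 - s * largerRoot s p + p = 0 := by
  unfold largerRoot
  linear_combination Real.sq_sqrt h / 4

theorem le_largerRoot (h : x ^ 2 - s * x + p ≤ 0) : x ≤ largerRoot s p := by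
  have : 2 * x - s ≤ √(s ^ 2 - 4 * p) := Real.le_sqrt_of_sq_le (by linarith)
  unfold largerRoot
  linarith

theorem lt_largerRoot (h : x ^ 2 - s * x + p < 0) : x < largerRoot s p := by
  have : 2 * x - s < √(s ^ 2 - 4 * p) := Real.lt_sqrt_of_sq_lt (by linarith)
  unfold largerRoot
  linarith

theorem largerRoot_lt (hs : s < 2 * x) (h : 0 < x ^ 2 - s * x + p) : largerRoot s p < x := by
  have : √(s ^ 2 - 4 * p) < 2 * x - s := (Real.sqrt_lt' (sub_pos.2 hs)).2 (by linarith)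
  unfold largerRoot
  linarith

theorem quadratic_pos_of_largerRoot_lt (h : largerRoot s p < x) : 0 < x ^ 2 - s * x + p := by
  have : √(s ^ 2 - 4 * p) < 2 * x - s := by
    unfold largerRoot at h
    linarith
  linarith [Real.lt_sq_of_sqrt_lt this]

end LargerRoot

section ReturnProbability

variable {b q v z : ℝ}

/-- The paper's function `F` with real parameter `b`; for `b = 2` the return probability of the flip
random walk is a zero of it. Division by zero makes its values at the poles `z = 1 - q² / b` and
`z = 1` meaningless. -/
noncomputable def returnDefect (b q z : ℝ) : ℝ :=
  z - (1 - q) ^ 2 * (1 - z) / (1 - q ^ 2 / b - z) - (b - 1) * q ^ 2 / (b ^ 2 * (1 - z))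

/-- The quadratic `Q` governing the zeros of `returnDefect b q` in the variable
`v = (b / q) (1 - z)`. -/
def escapeQuadratic (b q v : ℝ) : ℝ := v ^ 2 - (2 * b - 1 - (b - 1) * q) * v + (b - 1) * q

/-- The larger root `v⁺` of `escapeQuadratic b q`; for `b = 2` the paper's `w⁺` is `(q / b) v⁺`. -/
noncomputable def escapeRoot (b q : ℝ) : ℝ := largerRoot (2 * b - 1 - (b - 1) * q) ((b - 1) * q)

/-- The number `z* = 1 - (q / b) v⁺`, the smallest zero of `returnDefect b q`. -/
noncomputable def minReturn (b q : ℝ) : ℝ := 1 - q / b * escapeRoot b q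

theorem returnDefect_one_sub (hb : b ≠ 0) (hq : q ≠ 0) (hv : v ≠ 0) (hvq : v ≠ q) :
    returnDefect b q (1 - q / b * v) =
      -(q / b * ((v - 1) * escapeQuadratic b q v / (v * (v - q)))) := by
  have hpole : 1 - q ^ 2 / b - (1 - q / b * v) = q / b * (v - q) := by ring
  have hvq' : v - q ≠ 0 := sub_ne_zero.2 hvq
  rw [returnDefect, escapeQuadratic, hpole, sub_sub_cancel]
  field_simp
  ring

theorem escapeQuadratic_one : escapeQuadratic b q 1 = -(2 * (b - 1) * (1 - q)) := by
  unfold escapeQuadratic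
  ring

theorem escapeQuadratic_self : escapeQuadratic b q q = -(b * q * (1 - q)) := by
  unfold escapeQuadratic
  ring

theorem escapeQuadratic_div (hq : q ≠ 0) :
    escapeQuadratic b q (b / q) =
      (b / q) ^ 2 * (1 - q) ^ 2 + b / q * (1 - q) + (b - 1) * q := by
  unfold escapeQuadratic
  field_simp
  ring

theorem one_le_escapeRoot (hb : 1 ≤ b) (hq1 : q ≤ 1) : 1 ≤ escapeRoot b q := by
  refine le_largerRoot (escapeQuadratic_one.trans_le (neg_nonpos.2 ?_))
  exact mul_nonneg (mul_nonneg zero_le_two (sub_nonneg.2 hb)) (sub_nonneg.2 hq1)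

theorem escapeQuadratic_self_neg (hb : 0 < b) (hq0 : 0 < q) (hq1 : q < 1) :
    escapeQuadratic b q q < 0 :=
  escapeQuadratic_self.trans_lt (neg_neg_of_pos (mul_pos (mul_pos hb hq0) (sub_pos.2 hq1)))

theorem escapeQuadratic_escapeRoot (hb : 0 < b) (hq0 : 0 < q) (hq1 : q < 1) :
    escapeQuadratic b q (escapeRoot b q) = 0 :=
  quadratic_largerRoot
    (discrim_nonneg_of_quadratic_nonpos (escapeQuadratic_self_neg hb hq0 hq1).le)

theorem lt_escapeRoot (hb : 0 < b) (hq0 : 0 < q) (hq1 : q < 1) : q < escapeRoot b q :=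
  lt_largerRoot (escapeQuadratic_self_neg hb hq0 hq1)

theorem escapeRoot_lt_div (hb : 1 ≤ b) (hq0 : 0 < q) (hq1 : q < 1) : escapeRoot b q < b / q := by
  have hb0 : 0 < b := zero_lt_one.trans_le hb
  have hbq : b < b / q := (lt_div_iff₀ hq0).2 (mul_lt_of_lt_one_right hb0 hq1)
  have hmid : 0 ≤ (b - 1) * q := mul_nonneg (sub_nonneg.2 hb) hq0.le
  refine largerRoot_lt (by linarith) (lt_of_lt_of_eq ?_ (escapeQuadratic_div hq0.ne').symm)
  have : 0 < b / q * (1 - q) := mul_pos (div_pos hb0 hq0) (sub_pos.2 hq1)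
  positivity

theorem minReturn_pos (hb : 1 ≤ b) (hq0 : 0 < q) (hq1 : q < 1) : 0 < minReturn b q := by
  have hb0 : 0 < b := zero_lt_one.trans_le hb
  refine sub_pos.2 ?_
  calc q / b * escapeRoot b q < q / b * (b / q) :=
        mul_lt_mul_of_pos_left (escapeRoot_lt_div hb hq0 hq1) (div_pos hq0 hb0)
    _ = 1 := (div_mul_div_cancel₀ hb0.ne').trans (div_self hq0.ne')

theorem minReturn_lt_pole (hb : 0 < b) (hq0 : 0 < q) (hq1 : q < 1) :
    minReturn b q < 1 - q ^ 2 / b := by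
  refine sub_lt_sub_left ?_ 1
  calc q ^ 2 / b = q / b * q := by ring
    _ < q / b * escapeRoot b q :=
        mul_lt_mul_of_pos_left (lt_escapeRoot hb hq0 hq1) (div_pos hq0 hb)

theorem returnDefect_minReturn (hb : 0 < b) (hq0 : 0 < q) (hq1 : q < 1) :
    returnDefect b q (minReturn b q) = 0 := by
  have hlt := lt_escapeRoot hb hq0 hq1
  rw [minReturn, returnDefect_one_sub hb.ne' hq0.ne' (hq0.trans hlt).ne' hlt.ne',
    escapeQuadratic_escapeRoot hb hq0 hq1]
  simp

theorem returnDefect_neg_of_lt_minReturn (hb : 1 ≤ b) (hq0 : 0 < q) (hq1 : q < 1)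
    (hz : z < minReturn b q) : returnDefect b q z < 0 := by
  have hb0 : 0 < b := zero_lt_one.trans_le hb
  obtain ⟨v, rfl⟩ : ∃ v, z = 1 - q / b * v := ⟨b / q * (1 - z), by field_simp; ring⟩
  have hv : escapeRoot b q < v :=
    lt_of_mul_lt_mul_left ((sub_lt_sub_iff_left 1).1 hz) (div_pos hq0 hb0).le
  have hv1 : 0 < v - 1 := sub_pos.2 ((one_le_escapeRoot hb hq1.le).trans_lt hv)
  have hvq : 0 < v - q := sub_pos.2 ((lt_escapeRoot hb0 hq0 hq1).trans hv)
  have hv0 : 0 < v := by linarith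
  have hQ : 0 < escapeQuadratic b q v := quadratic_pos_of_largerRoot_lt hv
  rw [returnDefect_one_sub hb0.ne' hq0.ne' hv0.ne' (sub_pos.1 hvq).ne', neg_lt_zero]
  positivity

theorem smallest_root_general (hb : 1 ≤ b) (hq0 : 0 < q) (hq1 : q < 1) :
    0 < minReturn b q ∧ minReturn b q < 1 - q ^ 2 / b ∧ returnDefect b q (minReturn b q) = 0 ∧
      ∀ z < minReturn b q, returnDefect b q z < 0 :=
  have hb0 : 0 < b := zero_lt_one.trans_le hb
  ⟨minReturn_pos hb hq0 hq1, minReturn_lt_pole hb0 hq0 hq1, returnDefect_minReturn hb0 hq0 hq1,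
    fun _ ↦ returnDefect_neg_of_lt_minReturn hb hq0 hq1⟩

theorem minReturn_two : minReturn 2 q = 1 - q / 4 * (3 - q + √(9 - 10 * q + q ^ 2)) := by
  have hdiscrim : (2 * 2 - 1 - (2 - 1) * q) ^ 2 - 4 * ((2 - 1) * q) = 9 - 10 * q + q ^ 2 := by ring
  rw [minReturn, escapeRoot, largerRoot, hdiscrim]
  ring

theorem returnDefect_two :
    returnDefect 2 q z =
      z - (1 - q) ^ 2 * (1 - z) / (1 - q ^ 2 / 2 - z) - q ^ 2 / (4 * (1 - z)) := by
  norm_num [returnDefect]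

end ReturnProbability

/-- For `2/3 ≤ q < 1` and `b = 2`, with `z* = 1 - w⁺` where
`w⁺ = (q/4)(3 - q + √(9 - 10q + q²))`: `0 < z* < 1 - q²/2`, `F(z*) = 0`, and
`F(z) ≠ 0` for `z ∈ [0, z*)`; i.e. `z*` is the smallest root of
`F(z) = z - (1-q)²(1-z)/(1 - q²/2 - z) - q²/(4(1-z))` in `[0,1]`. -/
theorem smallest_root (q : ℝ) (hq0 : 2/3 ≤ q) (hq1 : q < 1) :
    let zstar : ℝ := 1 - (q/4) * (3 - q + Real.sqrt (9 - 10*q + q^2))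
    let F : ℝ → ℝ := fun z =>
      z - (1 - q)^2 * (1 - z) / (1 - q^2/2 - z) - q^2 / (4 * (1 - z))
    0 < zstar ∧ zstar < 1 - q^2/2 ∧ F zstar = 0 ∧
      ∀ z ∈ Set.Ico (0:ℝ) zstar, F z ≠ 0 := by
  obtain ⟨hpos, hpole, hroot, hneg⟩ := smallest_root_general one_le_two (by linarith) hq1
  simp only [← minReturn_two, ← returnDefect_two]
  exact ⟨hpos, hpole, hroot, fun z hz ↦ (hneg z hz.2).ne⟩
end
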